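/- For every n ≥ 5, the number of permutations of {1,…,n} avoiding 123 and containing 312 exactly once equals the number of permutations of {1,…,n} containing each of 123 and 312 exactly once; that is, s_n(123;312) = s_n(∅;{123,312}) for n ≥ 5 (both equal 2n−5). -/

import Mathlib

/-- Number of occurrences of the pattern `α ∈ S_k` in the permutation `π ∈ S_n`:
the number of strictly increasing choices of `k` indices such that the corresponding
subword of `π` is order-isomorphic to `α`. -/
noncomputable def occCount {k n : ℕ} (α : Equiv.Perm (Fin k)) (π : Equiv.Perm (Fin n)) : ℕ :=
  Nat.card {f : Fin k → Fin n // StrictMono f ∧ ∀ a b : Fin k, α a < α b ↔ π (f a) < π (f b)}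

/-- `π` avoids the pattern `α`. -/
def avoids {k n : ℕ} (α : Equiv.Perm (Fin k)) (π : Equiv.Perm (Fin n)) : Prop :=
  occCount α π = 0

/-- `π` contains the pattern `α` exactly once. -/
def containsOnce {k n : ℕ} (α : Equiv.Perm (Fin k)) (π : Equiv.Perm (Fin n)) : Prop :=
  occCount α π = 1

/-- The pattern `123` (as a permutation of `Fin 3`, 0-indexed). -/
def p123 : Equiv.Perm (Fin 3) := ⟨![0,1,2], ![0,1,2], by decide, by decide⟩
/-- The pattern `132`. -/
def p132 : Equiv.Perm (Fin 3) := ⟨![0,2,1], ![0,2,1], by decide, by decide⟩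
/-- The pattern `213`. -/
def p213 : Equiv.Perm (Fin 3) := ⟨![1,0,2], ![1,0,2], by decide, by decide⟩
/-- The pattern `231`. -/
def p231 : Equiv.Perm (Fin 3) := ⟨![1,2,0], ![2,0,1], by decide, by decide⟩
/-- The pattern `312`. -/
def p312 : Equiv.Perm (Fin 3) := ⟨![2,0,1], ![1,2,0], by decide, by decide⟩
/-- The pattern `321`. -/
def p321 : Equiv.Perm (Fin 3) := ⟨![2,1,0], ![2,1,0], by decide, by decide⟩

/-- `s_n(α;β)`: the number of permutations of `{1,…,n}` that avoid `α` and contain `β`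
exactly once. -/
noncomputable def sAvoidContain (α β : Equiv.Perm (Fin 3)) (n : ℕ) : ℕ :=
  Nat.card {π : Equiv.Perm (Fin n) // avoids α π ∧ containsOnce β π}

/-- `s_n(∅;{α,β})`: the number of permutations of `{1,…,n}` that contain each of `α` and `β`
exactly once. -/
noncomputable def sContainBoth (α β : Equiv.Perm (Fin 3)) (n : ℕ) : ℕ :=
  Nat.card {π : Equiv.Perm (Fin n) // containsOnce α π ∧ containsOnce β π}

/-!
Neither `123` nor `312` ends in its smallest letter, so appending a new minimum to a permutation
changes neither the occurrences of `123` nor those of `312`. Hence each count at `n + 1` is the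
count at `n` plus the number of permutations of length `n + 1` that do not end in their minimum.

In such a permutation, an ascent after the minimum gives a `123`, and a larger letter before the
minimum together with a smaller one after it gives a `312`. From length `4` on, prescribing the
numbers of both patterns leaves exactly two such permutations for either count, except that
`2 4 1 5 3` is a third one containing both patterns once. At length `3` the counts are `1` and `0`,
and the sporadic permutation makes up the difference: both counts are `2n - 5` from `n = 5` on.
-/

open Equiv (Perm)

variable {X Y : Type*} [LinearOrder X] [LinearOrder Y]

theorem eq_sort_inv_iff {n : ℕ} {g : Fin n → X} (hg : Function.Injective g) (π : Perm (Fin n)) :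
    π = (Tuple.sort g)⁻¹ ↔ ∀ i j, π i < π j ↔ g i < g j := by
  have hmono : StrictMono (g ∘ Tuple.sort g) :=
    (Tuple.monotone_sort g).strictMono_of_injective (hg.comp (Tuple.sort g).injective)
  constructor
  · rintro rfl i j
    simpa using (hmono.lt_iff_lt (a := (Tuple.sort g)⁻¹ i) (b := (Tuple.sort g)⁻¹ j)).symm
  · intro h
    have hπ : Monotone (g ∘ ⇑π⁻¹) :=
      StrictMono.monotone fun i j hij ↦ (h _ _).1 (by simpa using hij)
    have hsort := hg.comp_left (Tuple.unique_monotone hπ (Tuple.monotone_sort g))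
    rw [← DFunLike.coe_injective hsort, inv_inv]

theorem perm_eq_of_lt_iff_lt {n : ℕ} {π σ : Perm (Fin n)} (h : ∀ i j, π i < π j ↔ σ i < σ j) :
    π = σ :=
  ((eq_sort_inv_iff σ.injective π).2 h).trans
    ((eq_sort_inv_iff σ.injective σ).2 fun _ _ ↦ Iff.rfl).symm

theorem occCount_eq_ite {n : ℕ} (α π : Perm (Fin n)) :
    occCount α π = if α = π then 1 else 0 := by
  have hocc (f : Fin n → Fin n) :
      (StrictMono f ∧ ∀ a b, α a < α b ↔ π (f a) < π (f b)) ↔ f = id ∧ α = π := by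
    constructor
    · rintro ⟨hf, h⟩
      obtain rfl : f = id := hf.eq_id
      exact ⟨rfl, perm_eq_of_lt_iff_lt h⟩
    · rintro ⟨rfl, rfl⟩
      exact ⟨strictMono_id, fun _ _ ↦ Iff.rfl⟩
  simp only [occCount, hocc]
  split_ifs with h <;> simp [h]

theorem sAvoidContain_three {α β : Perm (Fin 3)} (h : α ≠ β) : sAvoidContain α β 3 = 1 := by
  have hβ (π : Perm (Fin 3)) : avoids α π ∧ containsOnce β π ↔ π = β := by
    simp only [avoids, containsOnce, occCount_eq_ite]
    grind
  simp [sAvoidContain, hβ]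

theorem sContainBoth_three {α β : Perm (Fin 3)} (h : α ≠ β) : sContainBoth α β 3 = 0 := by
  have hαβ (π : Perm (Fin 3)) : ¬ (containsOnce α π ∧ containsOnce β π) := by
    simp only [containsOnce, occCount_eq_ite]
    grind
  simp [sContainBoth, hαβ]

/-! ### Appending a new minimum -/

/-- The permutation `π₁ + 1, …, πₙ + 1, 1` obtained from `π` by appending a new minimum. -/
def appendMin {n : ℕ} (π : Perm (Fin n)) : Perm (Fin (n + 1)) :=
  finSuccEquivLast.trans (π.optionCongr.trans (finSuccEquiv n).symm)

@[simp]
theorem appendMin_castSucc {n : ℕ} (π : Perm (Fin n)) (i : Fin n) :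
    appendMin π i.castSucc = (π i).succ := by
  simp [appendMin]

@[simp]
theorem appendMin_last {n : ℕ} (π : Perm (Fin n)) : appendMin π (Fin.last n) = 0 := by
  simp [appendMin]

theorem appendMin_injective {n : ℕ} :
    Function.Injective (appendMin : Perm (Fin n) → Perm (Fin (n + 1))) := fun π σ h ↦
  Equiv.ext fun i ↦ by simpa using DFunLike.congr_fun h i.castSucc

theorem range_appendMin {n : ℕ} :
    Set.range (appendMin : Perm (Fin n) → Perm (Fin (n + 1))) = {σ | σ (Fin.last n) = 0} := by
  ext σ
  refine ⟨?_, fun hσ ↦ ?_⟩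
  · rintro ⟨π, rfl⟩
    exact appendMin_last π
  · have hne (i : Fin n) : σ i.castSucc ≠ 0 := fun hi ↦
      (Fin.castSucc_lt_last i).ne (σ.injective (hi.trans (Eq.symm hσ)))
    have hinj : Function.Injective fun i : Fin n ↦ (σ i.castSucc).pred (hne i) := fun i j hij ↦
      Fin.castSucc_injective _ (σ.injective (Fin.pred_inj.1 hij))
    refine ⟨Equiv.ofBijective _ (Finite.injective_iff_bijective.1 hinj), Equiv.ext fun i ↦ ?_⟩
    induction i using Fin.lastCases with
    | last => rw [appendMin_last]; exact Eq.symm hσ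
    | cast i => simp

theorem occCount_appendMin {k n : ℕ} {α : Perm (Fin (k + 1))} (hα : α (Fin.last k) ≠ 0)
    (π : Perm (Fin n)) : occCount α (appendMin π) = occCount α π := by
  have hne {f : Fin (k + 1) → Fin (n + 1)} (hf : StrictMono f)
      (hocc : ∀ a b, α a < α b ↔ appendMin π (f a) < appendMin π (f b)) (a : Fin (k + 1)) :
      f a ≠ Fin.last n := by
    intro ha
    have hlast : f (Fin.last k) = Fin.last n := by
      rw [← Fin.last_le_iff, ← ha]
      exact hf.monotone (Fin.le_last a)
    have := (hocc (α.symm 0) (Fin.last k)).1 (by simpa using Fin.pos_of_ne_zero hα)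
    simp [hlast] at this
  refine Nat.card_congr (Equiv.symm (Equiv.ofBijective
    (fun f ↦ ⟨fun a ↦ (f.1 a).castSucc, fun a b hab ↦ f.2.1 hab, by simpa using f.2.2⟩) ⟨?_, ?_⟩))
  · intro f g hfg
    simpa [Subtype.ext_iff, funext_iff] using hfg
  · rintro ⟨f, hf, hocc⟩
    have hcast (a) : ((f a).castPred (hne hf hocc a)).castSucc = f a := Fin.castSucc_castPred _ _
    exact ⟨⟨fun a ↦ (f a).castPred (hne hf hocc a), fun a b hab ↦ hf hab,
      fun a b ↦ by rw [hocc a b, ← hcast a, ← hcast b]; simp [-Fin.castSucc_castPred]⟩, by simp⟩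

theorem card_perm_succ {n : ℕ} {P : Perm (Fin (n + 1)) → Prop} {Q : Perm (Fin n) → Prop}
    (h : ∀ π, P (appendMin π) ↔ Q π) :
    Nat.card {σ // P σ} = Nat.card {π // Q π} + {σ | P σ ∧ σ (Fin.last n) ≠ 0}.ncard := by
  have himage : {σ | P σ ∧ σ (Fin.last n) = 0} = appendMin '' {π | Q π} := by
    ext σ
    constructor
    · rintro ⟨hP, hσ⟩
      obtain ⟨π, rfl⟩ := range_appendMin.ge hσ
      exact ⟨π, (h π).1 hP, rfl⟩
    · rintro ⟨π, hQ, rfl⟩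
      exact ⟨(h π).2 hQ, appendMin_last π⟩
  change {σ | P σ}.ncard = {π | Q π}.ncard + _
  rw [← Set.ncard_image_of_injective {π | Q π} appendMin_injective, ← himage]
  exact (Set.ncard_inter_add_ncard_sdiff_eq_ncard {σ | P σ} {σ | σ (Fin.last n) = 0}).symm

theorem sAvoidContain_succ {α β : Perm (Fin 3)} (hα : α 2 ≠ 0) (hβ : β 2 ≠ 0) (n : ℕ) :
    sAvoidContain α β (n + 1) = sAvoidContain α β n +
      {σ : Perm (Fin (n + 1)) |
        (avoids α σ ∧ containsOnce β σ) ∧ σ (Fin.last n) ≠ 0}.ncard :=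
  card_perm_succ fun π ↦ by
    simp only [avoids, containsOnce, occCount_appendMin hα π, occCount_appendMin hβ π]

theorem sContainBoth_succ {α β : Perm (Fin 3)} (hα : α 2 ≠ 0) (hβ : β 2 ≠ 0) (n : ℕ) :
    sContainBoth α β (n + 1) = sContainBoth α β n +
      {σ : Perm (Fin (n + 1)) |
        (containsOnce α σ ∧ containsOnce β σ) ∧ σ (Fin.last n) ≠ 0}.ncard :=
  card_perm_succ fun π ↦ by
    simp only [containsOnce, occCount_appendMin hα π, occCount_appendMin hβ π]

/-! ### Words and their occurrences of patterns -/

/-- The one-line word of `π`, with positions and letters counted from `0`. It is a function on `ℕ`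
so that positions can be added and subtracted freely; its values at positions `≥ n` are junk. -/
def permWord {n : ℕ} (π : Perm (Fin n)) (i : ℕ) : ℕ :=
  if h : i < n then π ⟨i, h⟩ else 0

@[simp]
theorem permWord_val {n : ℕ} (π : Perm (Fin n)) (i : Fin n) : permWord π i = π i := by
  simp [permWord]

theorem injOn_permWord {n : ℕ} (π : Perm (Fin n)) : Set.InjOn (permWord π) (Set.Iio n) := by
  intro i hi j hj hij
  lift i to Fin n using hi
  lift j to Fin n using hj
  simpa [Fin.val_inj] using hij

/-- The words `f 0, …, f (n - 1)` and `g 0, …, g (n - 1)` are order-isomorphic. The letters may come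
from different linear orders. -/
def SameOrder (n : ℕ) (f : ℕ → X) (g : ℕ → Y) : Prop :=
  ∀ i < n, ∀ j < n, f i < f j ↔ g i < g j

theorem sameOrder_of_lt {n : ℕ} {f : ℕ → X} {g : ℕ → Y} (hf : Set.InjOn f (Set.Iio n))
    (hg : Set.InjOn g (Set.Iio n)) (h : ∀ i j, i < j → j < n → (f i < f j ↔ g i < g j)) :
    SameOrder n f g := by
  intro i hi j hj
  have hfij := hf.eq_iff (show i ∈ Set.Iio n from hi) (show j ∈ Set.Iio n from hj)
  have hgij := hg.eq_iff (show i ∈ Set.Iio n from hi) (show j ∈ Set.Iio n from hj)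
  have hji := h j i
  grind

/-- The permutation of `Fin n` order-isomorphic to the word `g 0, …, g (n - 1)` with distinct
letters. `Tuple.sort` lists the positions by increasing letter, so its inverse ranks the letters. -/
def standardization (n : ℕ) (g : ℕ → X) : Perm (Fin n) :=
  (Tuple.sort fun i : Fin n ↦ g i)⁻¹

theorem eq_standardization_iff {n : ℕ} {g : ℕ → X} (hg : Set.InjOn g (Set.Iio n))
    {π : Perm (Fin n)} : π = standardization n g ↔ SameOrder n (permWord π) g := by
  have hg' : Function.Injective fun i : Fin n ↦ g i := fun i j hij ↦ Fin.ext (hg i.2 j.2 hij)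
  rw [standardization, eq_sort_inv_iff hg']
  refine ⟨fun h i hi j hj ↦ ?_, fun h i j ↦ ?_⟩
  · simpa [permWord, hi, hj] using h ⟨i, hi⟩ ⟨j, hj⟩
  · simpa using h i i.2 j j.2

theorem standardization_ne {n i j : ℕ} {f : ℕ → X} {g : ℕ → Y} (hf : Set.InjOn f (Set.Iio n))
    (hg : Set.InjOn g (Set.Iio n)) (hi : i < n) (hj : j < n) (hfij : f i < f j)
    (hgij : ¬ g i < g j) : standardization n f ≠ standardization n g := fun h ↦
  hgij (((eq_standardization_iff hg).1 h i hi j hj).1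
    (((eq_standardization_iff hf).1 rfl i hi j hj).2 hfij))

/-- The occurrences of a pattern of length three in the word `f 0, …, f (n - 1)`, as triples of
positions. -/
def occTriples (α : Perm (Fin 3)) (n : ℕ) (f : ℕ → X) : Set (ℕ × ℕ × ℕ) :=
  {t | t.1 < t.2.1 ∧ t.2.1 < t.2.2 ∧ t.2.2 < n ∧
    ∀ a b, α a < α b ↔ ![f t.1, f t.2.1, f t.2.2] a < ![f t.1, f t.2.1, f t.2.2] b}

theorem mem_occTriples {α : Perm (Fin 3)} {n : ℕ} {f : ℕ → X} {i j k : ℕ} :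
    (i, j, k) ∈ occTriples α n f ↔
      i < j ∧ j < k ∧ k < n ∧ StrictMono (![f i, f j, f k] ∘ α.symm) := by
  refine and_congr_right fun _ ↦ and_congr_right fun _ ↦ and_congr_right fun _ ↦
    ⟨fun h a b hab ↦ (h _ _).1 (by simpa using hab), fun h a b ↦ ?_⟩
  simpa using (h.lt_iff_lt (a := α a) (b := α b)).symm

theorem mem_occTriples_p123 {n : ℕ} {f : ℕ → X} {i j k : ℕ} :
    (i, j, k) ∈ occTriples p123 n f ↔ i < j ∧ j < k ∧ k < n ∧ f i < f j ∧ f j < f k := by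
  simp [mem_occTriples, Fin.strictMono_iff_lt_succ, Fin.forall_fin_succ, p123]

theorem mem_occTriples_p312 {n : ℕ} {f : ℕ → X} {i j k : ℕ} :
    (i, j, k) ∈ occTriples p312 n f ↔ i < j ∧ j < k ∧ k < n ∧ f j < f k ∧ f k < f i := by
  simp [mem_occTriples, Fin.strictMono_iff_lt_succ, Fin.forall_fin_succ, p312]

theorem SameOrder.occTriples_eq {n : ℕ} {f : ℕ → X} {g : ℕ → Y} (h : SameOrder n f g)
    (α : Perm (Fin 3)) : occTriples α n f = occTriples α n g := by
  ext ⟨i, j, k⟩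
  refine and_congr_right fun hij ↦ and_congr_right fun hjk ↦ and_congr_right fun hk ↦
    forall₂_congr fun a b ↦ iff_congr Iff.rfl ?_
  have hj : j < n := hjk.trans hk
  have hi : i < n := hij.trans hj
  fin_cases a <;> fin_cases b <;> exact h _ (by assumption) _ (by assumption)

theorem occTriples_permWord {n : ℕ} (α : Perm (Fin 3)) (π : Perm (Fin n)) :
    occTriples α n (permWord π) = (fun f : Fin 3 → Fin n ↦ ((f 0 : ℕ), (f 1 : ℕ), (f 2 : ℕ))) ''
      {f | StrictMono f ∧ ∀ a b, α a < α b ↔ π (f a) < π (f b)} := by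
  have hword (f : Fin 3 → Fin n) (a : Fin 3) :
      ![permWord π (f 0), permWord π (f 1), permWord π (f 2)] a = π (f a) := by
    fin_cases a <;> simp
  have hmono (f : Fin 3 → Fin n) : StrictMono f ↔ f 0 < f 1 ∧ f 1 < f 2 := by
    simp [Fin.strictMono_iff_lt_succ, Fin.forall_fin_succ]
  ext ⟨i, j, k⟩
  constructor
  · rintro ⟨hij, hjk, hk, h⟩
    dsimp only at hij hjk hk h
    refine ⟨![⟨i, by omega⟩, ⟨j, by omega⟩, ⟨k, hk⟩], ⟨(hmono _).2 ⟨hij, hjk⟩, fun a b ↦ ?_⟩, rfl⟩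
    rw [h a b, Fin.lt_def, ← hword _ a, ← hword _ b]
    rfl
  · rintro ⟨f, ⟨hf, h⟩, hfijk⟩
    simp only [Prod.mk.injEq] at hfijk
    obtain ⟨rfl, rfl, rfl⟩ := hfijk
    refine ⟨((hmono f).1 hf).1, ((hmono f).1 hf).2, (f 2).2, fun a b ↦ ?_⟩
    dsimp only
    rw [h a b, Fin.lt_def, hword, hword]

theorem occCount_eq_ncard {n : ℕ} (α : Perm (Fin 3)) (π : Perm (Fin n)) :
    occCount α π = (occTriples α n (permWord π)).ncard := by
  rw [occTriples_permWord, Set.ncard_image_of_injective]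
  · rfl
  · intro f g hfg
    simp only [Prod.mk.injEq, Fin.val_inj] at hfg
    exact funext (by simpa [Fin.forall_fin_succ] using hfg)

theorem avoids_iff {n : ℕ} {α : Perm (Fin 3)} {π : Perm (Fin n)} :
    avoids α π ↔ occTriples α n (permWord π) = ∅ := by
  have hfin : (occTriples α n (permWord π)).Finite := by
    rw [occTriples_permWord]
    exact (Set.toFinite _).image _
  rw [avoids, occCount_eq_ncard, Set.ncard_eq_zero hfin]

theorem containsOnce_iff {n : ℕ} {α : Perm (Fin 3)} {π : Perm (Fin n)} :
    containsOnce α π ↔ ∃ t, occTriples α n (permWord π) = {t} := by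
  rw [containsOnce, occCount_eq_ncard, Set.ncard_eq_one]

theorem occTriples_p123_eq_empty_iff {n : ℕ} {f : ℕ → X} :
    occTriples p123 n f = ∅ ↔ ∀ i j k, i < j → j < k → k < n → f i < f j → ¬ f j < f k := by
  simp [Set.eq_empty_iff_forall_notMem, Prod.forall, mem_occTriples_p123]

theorem occTriples_p123_eq_singleton_iff {n : ℕ} {f : ℕ → X} {a b c : ℕ} :
    occTriples p123 n f = {(a, b, c)} ↔ (a < b ∧ b < c ∧ c < n ∧ f a < f b ∧ f b < f c) ∧
      ∀ i j k, i < j → j < k → k < n → f i < f j → f j < f k → i = a ∧ j = b ∧ k = c := by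
  simp [Set.eq_singleton_iff_unique_mem, Prod.forall, mem_occTriples_p123]

theorem occTriples_p312_eq_singleton_iff {n : ℕ} {f : ℕ → X} {x y z : ℕ} :
    occTriples p312 n f = {(x, y, z)} ↔ (x < y ∧ y < z ∧ z < n ∧ f y < f z ∧ f z < f x) ∧
      ∀ i j k, i < j → j < k → k < n → f j < f k → f k < f i → i = x ∧ j = y ∧ k = z := by
  simp [Set.eq_singleton_iff_unique_mem, Prod.forall, mem_occTriples_p312]

/-! ### The words not ending in their minimum -/

/-- The word `3 1 n (n-1) … 4 2`, written with the letters `0, …, n - 1`. It avoids `123`, contains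
`312` once and does not end in its smallest letter. -/
def minSecondWord (n i : ℕ) : ℕ :=
  if i = 0 then 2 else if i = 1 then 0 else if i + 1 = n then 1 else n + 1 - i

/-- The word `(n-2) (n-3) … 2 n 1 (n-1)`, written with the letters `0, …, n - 1`. It avoids `123`,
contains `312` once and does not end in its smallest letter. -/
def minPenultWord (n i : ℕ) : ℕ :=
  if i + 3 = n then n - 1 else if i + 2 = n then 0 else if i + 1 = n then n - 2 else n - 3 - i

/-- The word `1 n (n-2) (n-1) (n-3) … 2`, written with the letters `0, …, n - 1`. It contains
each of `123` and `312` once and does not end in its smallest letter. -/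
def minFirstWord (n i : ℕ) : ℕ :=
  if i = 0 then 0 else if i = 1 then n - 1 else if i = 2 then n - 3 else if i = 3 then n - 2
  else n - i

/-- The word `(n-1) (n-3) (n-2) (n-4) … 1 n`, written with the letters `0, …, n - 1`. It contains
each of `123` and `312` once and does not end in its smallest letter. -/
def maxLastWord (n i : ℕ) : ℕ :=
  if i + 1 = n then n - 1 else if i = 0 then n - 2 else if i = 1 then n - 4
  else if i = 2 then n - 3 else n - 2 - i

/-- The word `2 4 1 5 3`, written with the letters `0, …, 4`: the sporadic word of length five that
contains each of `123` and `312` once and does not end in its smallest letter. -/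
def word24153 (i : ℕ) : ℕ :=
  if i = 0 then 1 else if i = 1 then 3 else if i = 2 then 0 else if i = 3 then 4 else 2

section Words

variable {n i j : ℕ}

theorem minSecondWord_lt_iff (hij : i < j) (hj : j < n) :
    minSecondWord n i < minSecondWord n j ↔ i = 1 ∨ i = 0 ∧ 2 ≤ j ∧ j + 1 ≠ n := by
  grind [minSecondWord]

theorem minPenultWord_lt_iff (hn : 3 ≤ n) (hij : i < j) (hj : j < n) :
    minPenultWord n i < minPenultWord n j ↔ j + 3 = n ∨ j + 1 = n ∧ i + 3 ≠ n := by
  grind [minPenultWord]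

theorem minFirstWord_lt_iff (hn : 4 ≤ n) (hij : i < j) (hj : j < n) :
    minFirstWord n i < minFirstWord n j ↔ i = 0 ∨ i = 2 ∧ j = 3 := by
  grind [minFirstWord]

theorem maxLastWord_lt_iff (hij : i < j) (hj : j < n) :
    maxLastWord n i < maxLastWord n j ↔ j + 1 = n ∨ i = 1 ∧ j = 2 := by
  grind [maxLastWord]

theorem word24153_lt_iff (hij : i < j) (hj : j < 5) :
    word24153 i < word24153 j ↔ i = 2 ∨ j = 3 ∨ i = 0 ∧ j ≠ 2 := by
  grind [word24153]

theorem injOn_minSecondWord (n : ℕ) : Set.InjOn (minSecondWord n) (Set.Iio n) := by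
  grind [Set.InjOn, minSecondWord]

theorem injOn_minPenultWord (hn : 3 ≤ n) : Set.InjOn (minPenultWord n) (Set.Iio n) := by
  grind [Set.InjOn, minPenultWord]

theorem injOn_minFirstWord (hn : 4 ≤ n) : Set.InjOn (minFirstWord n) (Set.Iio n) := by
  grind [Set.InjOn, minFirstWord]

theorem injOn_maxLastWord (n : ℕ) : Set.InjOn (maxLastWord n) (Set.Iio n) := by
  grind [Set.InjOn, maxLastWord]

theorem injOn_word24153 : Set.InjOn word24153 (Set.Iio 5) := by
  grind [Set.InjOn, word24153]

theorem occTriples_p123_minSecondWord (n : ℕ) : occTriples p123 n (minSecondWord n) = ∅ := by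
  rw [occTriples_p123_eq_empty_iff]
  intro i j k hij hjk hk
  rw [minSecondWord_lt_iff hij (by omega), minSecondWord_lt_iff hjk hk]
  omega

theorem occTriples_p123_minPenultWord (hn : 3 ≤ n) :
    occTriples p123 n (minPenultWord n) = ∅ := by
  rw [occTriples_p123_eq_empty_iff]
  intro i j k hij hjk hk
  rw [minPenultWord_lt_iff hn hij (by omega), minPenultWord_lt_iff hn hjk hk]
  omega

theorem occTriples_p312_minSecondWord (hn : 3 ≤ n) :
    occTriples p312 n (minSecondWord n) = {(0, 1, n - 1)} := by
  rw [occTriples_p312_eq_singleton_iff]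
  refine ⟨by grind [minSecondWord], fun i j k hij hjk hk hjk' hki ↦ ?_⟩
  have hik := hki.not_gt
  rw [minSecondWord_lt_iff hjk hk] at hjk'
  rw [minSecondWord_lt_iff (hij.trans hjk) hk] at hik
  omega

theorem occTriples_p312_minPenultWord (hn : 3 ≤ n) :
    occTriples p312 n (minPenultWord n) = {(n - 3, n - 2, n - 1)} := by
  rw [occTriples_p312_eq_singleton_iff]
  refine ⟨by grind [minPenultWord], fun i j k hij hjk hk hjk' hki ↦ ?_⟩
  have hik := hki.not_gt
  rw [minPenultWord_lt_iff hn hjk hk] at hjk'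
  rw [minPenultWord_lt_iff hn (hij.trans hjk) hk] at hik
  omega

theorem occTriples_p123_minFirstWord (hn : 4 ≤ n) :
    occTriples p123 n (minFirstWord n) = {(0, 2, 3)} := by
  rw [occTriples_p123_eq_singleton_iff]
  refine ⟨by grind [minFirstWord], fun i j k hij hjk hk hij' hjk' ↦ ?_⟩
  rw [minFirstWord_lt_iff hn hij (by omega)] at hij'
  rw [minFirstWord_lt_iff hn hjk hk] at hjk'
  omega

theorem occTriples_p312_minFirstWord (hn : 4 ≤ n) :
    occTriples p312 n (minFirstWord n) = {(1, 2, 3)} := by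
  rw [occTriples_p312_eq_singleton_iff]
  refine ⟨by grind [minFirstWord], fun i j k hij hjk hk hjk' hki ↦ ?_⟩
  have hik := hki.not_gt
  rw [minFirstWord_lt_iff hn hjk hk] at hjk'
  rw [minFirstWord_lt_iff hn (hij.trans hjk) hk] at hik
  omega

theorem occTriples_p123_maxLastWord (hn : 4 ≤ n) :
    occTriples p123 n (maxLastWord n) = {(1, 2, n - 1)} := by
  rw [occTriples_p123_eq_singleton_iff]
  refine ⟨by grind [maxLastWord], fun i j k hij hjk hk hij' hjk' ↦ ?_⟩
  rw [maxLastWord_lt_iff hij (by omega)] at hij'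
  rw [maxLastWord_lt_iff hjk hk] at hjk'
  omega

theorem occTriples_p312_maxLastWord (hn : 4 ≤ n) :
    occTriples p312 n (maxLastWord n) = {(0, 1, 2)} := by
  rw [occTriples_p312_eq_singleton_iff]
  refine ⟨by grind [maxLastWord], fun i j k hij hjk hk hjk' hki ↦ ?_⟩
  have hik := hki.not_gt
  rw [maxLastWord_lt_iff hjk hk] at hjk'
  rw [maxLastWord_lt_iff (hij.trans hjk) hk] at hik
  omega

theorem occTriples_p123_word24153 : occTriples p123 5 word24153 = {(0, 1, 3)} := by
  rw [occTriples_p123_eq_singleton_iff]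
  refine ⟨by grind [word24153], fun i j k hij hjk hk hij' hjk' ↦ ?_⟩
  rw [word24153_lt_iff hij (by omega)] at hij'
  rw [word24153_lt_iff hjk hk] at hjk'
  omega

theorem occTriples_p312_word24153 : occTriples p312 5 word24153 = {(1, 2, 4)} := by
  rw [occTriples_p312_eq_singleton_iff]
  refine ⟨by grind [word24153], fun i j k hij hjk hk hjk' hki ↦ ?_⟩
  have hik := hki.not_gt
  rw [word24153_lt_iff hjk hk] at hjk'
  rw [word24153_lt_iff (hij.trans hjk) hk] at hik
  omega

end Words

/-! ### Classification by the position of the minimum -/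

/-- The smallest of the letters `f 0, …, f (n - 1)` is at position `p`, and only there. This is the
position by which the classification of words below splits into cases. -/
def IsMinAt (n : ℕ) (f : ℕ → X) (p : ℕ) : Prop :=
  p < n ∧ ∀ i < n, i ≠ p → f p < f i

section Classification

variable {n p a b c x y z : ℕ} {f : ℕ → X}

theorem exists_isMinAt (hf : Set.InjOn f (Set.Iio n)) (hlast : ∃ i < n - 1, f i < f (n - 1)) :
    ∃ p, p + 1 < n ∧ IsMinAt n f p := by
  obtain ⟨i, hi, hfi⟩ := hlast
  obtain ⟨p, hpn, hp⟩ := (Finset.range n).exists_min_image f ⟨i, Finset.mem_range.2 (by omega)⟩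
  simp only [Finset.mem_range] at hpn hp
  have hp_last : p ≠ n - 1 := by
    rintro rfl
    exact (hp i (by omega)).not_gt hfi
  exact ⟨p, by omega, hpn, fun j hj hjp ↦
    (hp j hj).lt_of_ne fun h ↦ hjp (hf hj hpn h.symm)⟩

theorem lt_or_gt_of_injOn (hf : Set.InjOn f (Set.Iio n)) {i j : ℕ} (hij : i < j) (hj : j < n) :
    f i < f j ∨ f j < f i :=
  lt_or_gt_of_ne fun h ↦ hij.ne (hf (hij.trans hj) hj h)

-- An inversion `f k < f i` across the minimum is an occurrence `(i, p, k)` of `312`.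
theorem IsMinAt.lt_of_not_inversion (hf : Set.InjOn f (Set.Iio n)) (hmin : IsMinAt n f p)
    (h312 : occTriples p312 n f = {(x, p, z)}) {i k : ℕ} (hi : i < p) (hpk : p < k) (hk : k < n)
    (hne : ¬ (i = x ∧ k = z)) : f i < f k := by
  refine (lt_or_gt_of_injOn hf (hi.trans hpk) hk).resolve_right fun h ↦ hne ?_
  have := (occTriples_p312_eq_singleton_iff.1 h312).2 i p k hi hpk hk (hmin.2 k hk hpk.ne') h
  exact ⟨this.1, this.2.2⟩

theorem IsMinAt.succ_eq_of_inversion (hf : Set.InjOn f (Set.Iio n)) (hmin : IsMinAt n f p)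
    (h312 : occTriples p312 n f = {(x, p, z)}) : x + 1 = p := by
  obtain ⟨⟨hxp, hpz, hzn, -, hzx⟩, huniq⟩ := occTriples_p312_eq_singleton_iff.1 h312
  by_contra hne
  have hz : f (p - 1) < f z :=
    hmin.lt_of_not_inversion hf h312 (by omega) hpz hzn (by omega)
  have := huniq x (p - 1) z (by omega) (by omega) hzn hz hzx
  omega

theorem IsMinAt.last_eq_of_inversion (hmin : IsMinAt n f p)
    (h312 : occTriples p312 n f = {(x, p, z)}) (hanti : StrictAntiOn f (Set.Ioo p n)) :
    z + 1 = n := by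
  obtain ⟨⟨hxp, hpz, hzn, -, hzx⟩, huniq⟩ := occTriples_p312_eq_singleton_iff.1 h312
  by_contra hne
  have hlast : f (n - 1) < f z := hanti ⟨hpz, hzn⟩ ⟨by omega, by omega⟩ (by omega)
  have := huniq x p (n - 1) hxp (by omega) (by omega) (hmin.2 _ (by omega) (by omega))
    (hlast.trans hzx)
  omega

theorem IsMinAt.strictAntiOn_of_avoids (hf : Set.InjOn f (Set.Iio n)) (hmin : IsMinAt n f p)
    (h123 : occTriples p123 n f = ∅) : StrictAntiOn f (Set.Ioo p n) := by
  rintro i ⟨hpi, hi⟩ j ⟨-, hj⟩ hij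
  exact (lt_or_gt_of_injOn hf hij hj).resolve_left
    (occTriples_p123_eq_empty_iff.1 h123 p i j hpi hij hj (hmin.2 i hi hpi.ne'))

theorem IsMinAt.eq_of_avoids (hf : Set.InjOn f (Set.Iio n)) (hmin : IsMinAt n f p)
    (hp : p + 1 < n) (h123 : occTriples p123 n f = ∅)
    (h312 : occTriples p312 n f = {(x, y, z)}) : y = p := by
  have hanti := hmin.strictAntiOn_of_avoids hf h123
  rw [occTriples_p123_eq_empty_iff] at h123
  obtain ⟨⟨hxy, hyz, hzn, hyz', hzx⟩, huniq⟩ := occTriples_p312_eq_singleton_iff.1 h312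
  by_contra hne
  have hacross (i k) (hi : i < p) (hpk : p < k) (hk : k < n) : f i < f k :=
    (lt_or_gt_of_injOn hf (hi.trans hpk) hk).resolve_right fun h ↦
      hne (huniq i p k hi hpk hk (hmin.2 k hk hpk.ne') h).2.1.symm
  have hyp : y < p := by
    by_contra hyp
    exact (hanti ⟨by omega, by omega⟩ ⟨by omega, hzn⟩ hyz).not_gt hyz'
  have hzp : z ≠ p := by
    rintro rfl
    exact (hmin.2 y (by omega) hne).not_gt hyz'
  rcases hzp.lt_or_gt with hzp | hpz
  · exact h123 y z (p + 1) hyz (by omega) hp hyz' (hacross z (p + 1) hzp (by omega) hp)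
  · exact (hacross x z (by omega) hpz hzn).not_gt hzx

theorem sameOrder_minSecondWord (hf : Set.InjOn f (Set.Iio n))
    (hmin : IsMinAt n f p) (hp : p + 2 < n) (h123 : occTriples p123 n f = ∅)
    (h312 : occTriples p312 n f = {(x, p, z)}) : SameOrder n f (minSecondWord n) := by
  have hanti := hmin.strictAntiOn_of_avoids hf h123
  have hx := hmin.succ_eq_of_inversion hf h312
  have hz := hmin.last_eq_of_inversion h312 hanti
  have hacross (i k) (hi : i < p) (hpk : p < k) (hk : k < n) :=
    hmin.lt_of_not_inversion hf h312 hi hpk hk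
  rw [occTriples_p123_eq_empty_iff] at h123
  obtain ⟨⟨hxp, hpz, hzn, -, hzx⟩, -⟩ := occTriples_p312_eq_singleton_iff.1 h312
  have hp1 : p = 1 := by
    by_contra hne
    have h0z : f 0 < f z := hacross 0 z (by omega) hpz hzn (by omega)
    have hxp1 : f x < f (p + 1) := hacross x (p + 1) hxp (by omega) (by omega) (by omega)
    exact h123 0 x (p + 1) (by omega) (by omega) (by omega) (h0z.trans hzx) hxp1
  refine sameOrder_of_lt hf (injOn_minSecondWord n) fun i j hij hj ↦ ?_
  rw [minSecondWord_lt_iff hij hj]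
  have hij' : 1 < i → f j < f i := fun hi ↦ hanti ⟨by omega, by omega⟩ ⟨by omega, hj⟩ hij
  grind [IsMinAt]

theorem sameOrder_minPenultWord (hf : Set.InjOn f (Set.Iio n))
    (hmin : IsMinAt n f p) (hp : p + 2 = n) (h123 : occTriples p123 n f = ∅)
    (h312 : occTriples p312 n f = {(x, p, z)}) : SameOrder n f (minPenultWord n) := by
  have hx := hmin.succ_eq_of_inversion hf h312
  have hacross (i k) (hi : i < p) (hpk : p < k) (hk : k < n) :=
    hmin.lt_of_not_inversion hf h312 hi hpk hk
  rw [occTriples_p123_eq_empty_iff] at h123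
  obtain ⟨⟨-, hpz, hzn, -, hzx⟩, -⟩ := occTriples_p312_eq_singleton_iff.1 h312
  have hbelow (i) (hi : i < x) : f i < f z := hacross i z (by omega) hpz hzn (by omega)
  have hinit (i j) (hij : i < j) (hj : j < x) : f j < f i :=
    (lt_or_gt_of_injOn hf hij (by omega)).resolve_left fun h ↦
      h123 i j z hij (by omega) hzn h (hbelow j hj)
  refine sameOrder_of_lt hf (injOn_minPenultWord (by omega)) fun i j hij hj ↦ ?_
  rw [minPenultWord_lt_iff (by omega) hij hj]
  grind [IsMinAt]

theorem avoids_containsOnce_iff_sameOrder (hn : 3 ≤ n) (hf : Set.InjOn f (Set.Iio n)) :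
    ((occTriples p123 n f = ∅ ∧ ∃ t, occTriples p312 n f = {t}) ∧ ∃ i < n - 1, f i < f (n - 1)) ↔
      SameOrder n f (minSecondWord n) ∨ SameOrder n f (minPenultWord n) := by
  constructor
  · rintro ⟨⟨h123, ⟨x, y, z⟩, h312⟩, hlast⟩
    obtain ⟨p, hp, hmin⟩ := exists_isMinAt hf hlast
    obtain rfl := hmin.eq_of_avoids hf hp h123 h312
    rcases (show y + 2 < n ∨ y + 2 = n by omega) with hy | hy
    · exact Or.inl (sameOrder_minSecondWord hf hmin hy h123 h312)
    · exact Or.inr (sameOrder_minPenultWord hf hmin hy h123 h312)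
  · rintro (h | h)
    · refine ⟨⟨?_, (0, 1, n - 1), ?_⟩, 1, by omega, ?_⟩
      · rw [h.occTriples_eq, occTriples_p123_minSecondWord n]
      · rw [h.occTriples_eq, occTriples_p312_minSecondWord hn]
      · rw [h _ (by omega) _ (by omega)]
        grind [minSecondWord]
    · refine ⟨⟨?_, (n - 3, n - 2, n - 1), ?_⟩, n - 2, by omega, ?_⟩
      · rw [h.occTriples_eq, occTriples_p123_minPenultWord hn]
      · rw [h.occTriples_eq, occTriples_p312_minPenultWord hn]
      · rw [h _ (by omega) _ (by omega)]
        grind [minPenultWord]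

theorem eq_add_of_unique_ascent {l m : ℕ}
    (hanti : ∀ i j, l ≤ i → i < j → j < m → ¬ (i = y ∧ j = z) → f j < f i)
    (hl : l ≤ x) (hm : z < m) (h312 : occTriples p312 n f = {(x, y, z)}) :
    x = l ∧ y = l + 1 ∧ z = l + 2 := by
  obtain ⟨⟨hxy, hyz, hzn, hyz', -⟩, huniq⟩ := occTriples_p312_eq_singleton_iff.1 h312
  have hbefore (i) (hli : l ≤ i) (hiy : i < y) : i = x :=
    (huniq i y z hiy hyz hzn hyz' (hanti i z hli (by omega) hm (by omega))).1
  have hx := hbefore l le_rfl (by omega)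
  have hy : y = l + 1 := by
    by_contra hne
    have := hbefore (l + 1) (by omega) (by omega)
    omega
  have hz : z = l + 2 := by
    by_contra hne
    exact hyz'.not_gt ((hanti (l + 2) z (by omega) (by omega) hm (by omega)).trans
      (hanti y (l + 2) (by omega) (by omega) (by omega) (by omega)))
  exact ⟨hx.symm, hy, hz⟩

theorem sameOrder_minFirstWord (hf : Set.InjOn f (Set.Iio n))
    (hmin : IsMinAt n f 0) (h123 : occTriples p123 n f = {(a, b, c)})
    (h312 : occTriples p312 n f = {(x, y, z)}) : SameOrder n f (minFirstWord n) := by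
  obtain ⟨⟨hab, hbc, hcn, -, -⟩, huniq⟩ := occTriples_p123_eq_singleton_iff.1 h123
  obtain ⟨⟨hxy, hyz, hzn, hyz', hzx⟩, -⟩ := occTriples_p312_eq_singleton_iff.1 h312
  have hascent (i j) (hi : 0 < i) (hij : i < j) (hj : j < n) (h : f i < f j) : i = b ∧ j = c :=
    (huniq 0 i j hi hij hj (hmin.2 i (by omega) hi.ne') h).2
  obtain ⟨rfl, rfl⟩ := hascent y z (by omega) hyz hzn hyz'
  have hanti (i j) (hi : 1 ≤ i) (hij : i < j) (hj : j < n) (hne : ¬ (i = y ∧ j = z)) :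
      f j < f i :=
    (lt_or_gt_of_injOn hf hij hj).resolve_left fun h ↦ hne (hascent i j hi hij hj h)
  have hx : 1 ≤ x := by
    by_contra! hx
    obtain rfl : x = 0 := by omega
    exact hzx.not_gt (hmin.2 z hzn (by omega))
  obtain ⟨rfl, rfl, rfl⟩ := eq_add_of_unique_ascent hanti hx hzn h312
  refine sameOrder_of_lt hf (injOn_minFirstWord (by omega)) fun i j hij hj ↦ ?_
  rw [minFirstWord_lt_iff (by omega) hij hj]
  grind [IsMinAt]

-- A later ascent would form a `123` both with the minimum and with the first letter.
theorem IsMinAt.strictAntiOn_of_no_inversion (hf : Set.InjOn f (Set.Iio n)) (hmin : IsMinAt n f p)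
    (hp0 : 0 < p) (hacross : ∀ i k, i < p → p < k → k < n → f i < f k)
    (h123 : occTriples p123 n f = {(a, b, c)}) : StrictAntiOn f (Set.Ioo p n) := by
  obtain ⟨-, huniq⟩ := occTriples_p123_eq_singleton_iff.1 h123
  rintro i ⟨hpi, -⟩ j ⟨-, hj⟩ hij
  refine (lt_or_gt_of_injOn hf hij hj).resolve_left fun h ↦ ?_
  have hp := huniq p i j hpi hij hj (hmin.2 i (by omega) (by omega)) h
  have h0 := huniq 0 i j (by omega) hij hj (hacross 0 i hp0 hpi (by omega)) h
  omega

theorem IsMinAt.middle_lt (hmin : IsMinAt n f p) (hanti : StrictAntiOn f (Set.Ioo p n))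
    (h123 : occTriples p123 n f = {(a, b, c)}) : b < p := by
  obtain ⟨⟨hab, hbc, hcn, hab', hbc'⟩, -⟩ := occTriples_p123_eq_singleton_iff.1 h123
  have hne : b ≠ p := by
    rintro rfl
    exact hab'.not_gt (hmin.2 a (by omega) (by omega))
  by_contra hbp
  exact hbc'.not_gt (hanti ⟨by omega, by omega⟩ ⟨by omega, hcn⟩ hbc)

theorem sameOrder_maxLastWord (hf : Set.InjOn f (Set.Iio n))
    (hmin : IsMinAt n f p) (hp0 : 0 < p) (hp : p + 1 < n)
    (hacross : ∀ i k, i < p → p < k → k < n → f i < f k)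
    (h123 : occTriples p123 n f = {(a, b, c)})
    (h312 : occTriples p312 n f = {(x, y, z)}) : SameOrder n f (maxLastWord n) := by
  have hbp := hmin.middle_lt (hmin.strictAntiOn_of_no_inversion hf hp0 hacross h123) h123
  obtain ⟨⟨hab, -, -, hab', -⟩, huniq⟩ := occTriples_p123_eq_singleton_iff.1 h123
  obtain ⟨⟨hxy, hyz, hzn, hyz', hzx⟩, -⟩ := occTriples_p312_eq_singleton_iff.1 h312
  have hpn : p + 2 = n := by
    have hthird (k) (hpk : p < k) (hk : k < n) : k = c :=
      (huniq a b k hab (by omega) hk hab' (hacross b k hbp hpk hk)).2.2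
    have := hthird (p + 1) (by omega) (by omega)
    have := hthird (n - 1) (by omega) (by omega)
    omega
  have hinit (i j) (hij : i < j) (hj : j < p) (h : f i < f j) : i = a ∧ j = b := by
    have := huniq i j (n - 1) hij (by omega) (by omega) h
      (hacross j (n - 1) hj (by omega) (by omega))
    omega
  have hzp : z < p := by
    have hne : z ≠ p := by
      rintro rfl
      exact hyz'.not_gt (hmin.2 y (by omega) (by omega))
    by_contra hzp
    exact hzx.not_gt (hacross x z (by omega) (by omega) hzn)
  obtain ⟨rfl, rfl⟩ := hinit y z hyz hzp hyz'
  have hanti (i j) (_ : 0 ≤ i) (hij : i < j) (hj : j < p) (hne : ¬ (i = y ∧ j = z)) :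
      f j < f i :=
    (lt_or_gt_of_injOn hf hij (by omega)).resolve_left fun h ↦ hne (hinit i j hij hj h)
  obtain ⟨rfl, rfl, rfl⟩ := eq_add_of_unique_ascent hanti (Nat.zero_le x) hzp h312
  refine sameOrder_of_lt hf (injOn_maxLastWord n) fun i j hij hj ↦ ?_
  rw [maxLastWord_lt_iff hij hj]
  have hpi := hmin.2 i (by omega)
  rcases (show j + 1 = n ∨ j = p ∨ j < p by omega) with hj | rfl | hj <;> grind

theorem IsMinAt.length_eq_four_of_ascent (hf : Set.InjOn f (Set.Iio n)) (hmin : IsMinAt n f p)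
    (h123 : occTriples p123 n f = {(a, b, c)})
    (h312 : occTriples p312 n f = {(x, p, z)}) {i j : ℕ} (hpi : p < i) (hij : i < j) (hj : j < n)
    (hasc : f i < f j) : p = 1 ∧ n = 4 ∧ i = 2 ∧ z = 2 := by
  have hx := hmin.succ_eq_of_inversion hf h312
  have hacross (i k) (hi : i < p) (hpk : p < k) (hk : k < n) :=
    hmin.lt_of_not_inversion hf h312 hi hpk hk
  obtain ⟨-, huniq⟩ := occTriples_p123_eq_singleton_iff.1 h123
  obtain ⟨⟨hxp, hpz, hzn, -, hzx⟩, huniq'⟩ := occTriples_p312_eq_singleton_iff.1 h312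
  obtain ⟨rfl, rfl, rfl⟩ :=
    huniq p i j hpi hij hj (hmin.2 i (by omega) (by omega)) hasc
  have hinit (h) (hhp : h < p) : h = x ∧ i = z := by
    by_contra hne
    have := huniq h i j (by omega) hij hj (hacross h i hhp hpi (by omega) hne) hasc
    omega
  have hp1 : p = 1 := by
    have := hinit 0 (by omega)
    omega
  obtain rfl : i = z := (hinit x hxp).2
  have hsuffix (k) (hk : p < k) (hkn : k < n) : k = i ∨ k = j := by
    by_contra! hne
    have hxk : f x < f k := hacross x k hxp hk hkn (by omega)
    have hki : k < i := by
      by_contra hki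
      have := huniq p i k hpi (by omega) hkn (hmin.2 i (by omega) (by omega)) (hzx.trans hxk)
      omega
    rcases lt_or_gt_of_injOn hf (hki.trans hij) hj with h | h
    · have := huniq p k j hk (by omega) hj (hmin.2 k hkn (by omega)) h
      omega
    · have := huniq' k i j hki hij hj hasc h
      omega
  have := hsuffix 2 (by omega) (by omega)
  have := hsuffix 3 (by omega) (by omega)
  have := hsuffix (n - 1) (by omega) (by omega)
  omega

theorem sameOrder_maxLastWord_of_ascent (hf : Set.InjOn f (Set.Iio n)) (hmin : IsMinAt n f p)
    (h123 : occTriples p123 n f = {(a, b, c)})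
    (h312 : occTriples p312 n f = {(x, p, z)}) {i j : ℕ} (hpi : p < i) (hij : i < j) (hj : j < n)
    (hasc : f i < f j) : SameOrder n f (maxLastWord n) := by
  have hx := hmin.succ_eq_of_inversion hf h312
  have hacross (i k) (hi : i < p) (hpk : p < k) (hk : k < n) :=
    hmin.lt_of_not_inversion hf h312 hi hpk hk
  obtain ⟨rfl, rfl, rfl, rfl⟩ := hmin.length_eq_four_of_ascent hf h123 h312 hpi hij hj hasc
  obtain ⟨⟨-, -, -, -, hzx⟩, -⟩ := occTriples_p312_eq_singleton_iff.1 h312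
  obtain rfl : x = 0 := by omega
  obtain rfl : j = 3 := by omega
  have h10 : f 1 < f 0 := hmin.2 0 (by omega) (by omega)
  have h03 : f 0 < f 3 := hacross 0 3 (by omega) (by omega) (by omega) (by omega)
  refine sameOrder_of_lt hf (injOn_maxLastWord _) fun i j hij hj ↦ ?_
  rw [maxLastWord_lt_iff hij hj]
  interval_cases j <;> interval_cases i <;> grind [IsMinAt]

theorem IsMinAt.length_eq_five (hf : Set.InjOn f (Set.Iio n)) (hmin : IsMinAt n f p)
    (hanti : StrictAntiOn f (Set.Ioo p n)) (h123 : occTriples p123 n f = {(a, b, c)})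
    (h312 : occTriples p312 n f = {(x, p, z)}) :
    n = 5 ∧ p = 2 ∧ a = 0 ∧ b = 1 ∧ c = 3 := by
  have hx := hmin.succ_eq_of_inversion hf h312
  have hz := hmin.last_eq_of_inversion h312 hanti
  have hbp := hmin.middle_lt hanti h123
  have hacross (i k) (hi : i < p) (hpk : p < k) (hk : k < n) :=
    hmin.lt_of_not_inversion hf h312 hi hpk hk
  obtain ⟨⟨hab, hbc, hcn, hab', hbc'⟩, huniq⟩ := occTriples_p123_eq_singleton_iff.1 h123
  obtain ⟨⟨hxp, hpz, hzn, -, hzx⟩, -⟩ := occTriples_p312_eq_singleton_iff.1 h312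
  have hbelow (i) (hi : i < x) : f i < f z := hacross i z (by omega) hpz hzn (by omega)
  obtain rfl : b = x := by
    by_contra hne
    have hbz := hbelow b (by omega)
    have := huniq a b z hab (by omega) hzn hab' hbz
    have := huniq a b x hab (by omega) (by omega) hab' (hbz.trans hzx)
    omega
  have hthird (k) (hpk : p < k) (hkz : k < z) : k = c :=
    (huniq a b k hab (by omega) (by omega) hab'
      (hacross b k hxp hpk (by omega) (by omega))).2.2
  have hc : c = p + 1 ∧ z = p + 2 := by
    have hcz : c ≠ z := by
      rintro rfl
      exact hbc'.not_gt hzx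
    have hcp : c ≠ p := by
      rintro rfl
      exact hbc'.not_gt (hmin.2 b (by omega) (by omega))
    have := hthird (p + 1)
    have := hthird (p + 2)
    omega
  have hfirst (i) (hi : i < b) : i = a :=
    (huniq i b c hi hbc hcn ((hbelow i hi).trans hzx) hbc').1
  have := hfirst 0 (by omega)
  have := hfirst (b - 1) (by omega)
  omega

theorem sameOrder_word24153 (hf : Set.InjOn f (Set.Iio n)) (hmin : IsMinAt n f p)
    (hanti : StrictAntiOn f (Set.Ioo p n)) (h123 : occTriples p123 n f = {(a, b, c)})
    (h312 : occTriples p312 n f = {(x, p, z)}) : n = 5 ∧ SameOrder n f word24153 := by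
  have hx := hmin.succ_eq_of_inversion hf h312
  have hz := hmin.last_eq_of_inversion h312 hanti
  have hacross (i k) (hi : i < p) (hpk : p < k) (hk : k < n) :=
    hmin.lt_of_not_inversion hf h312 hi hpk hk
  obtain ⟨rfl, rfl, rfl, rfl, rfl⟩ := hmin.length_eq_five hf hanti h123 h312
  obtain rfl : x = 1 := by omega
  obtain rfl : z = 4 := by omega
  obtain ⟨⟨-, -, -, h01, h13⟩, -⟩ := occTriples_p123_eq_singleton_iff.1 h123
  obtain ⟨⟨-, -, -, -, h41⟩, -⟩ := occTriples_p312_eq_singleton_iff.1 h312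
  have h04 : f 0 < f 4 := hacross 0 4 (by omega) (by omega) (by omega) (by omega)
  refine ⟨rfl, sameOrder_of_lt hf injOn_word24153 fun i j hij hj ↦ ?_⟩
  rw [word24153_lt_iff hij hj]
  interval_cases j <;> interval_cases i <;> grind [IsMinAt]

theorem containsOnce_of_sameOrder (hn : 4 ≤ n)
    (h : SameOrder n f (minFirstWord n) ∨ SameOrder n f (maxLastWord n) ∨
      n = 5 ∧ SameOrder n f word24153) :
    ((∃ t, occTriples p123 n f = {t}) ∧ ∃ t, occTriples p312 n f = {t}) ∧
      ∃ i < n - 1, f i < f (n - 1) := by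
  rcases h with h | h | ⟨rfl, h⟩
  · rw [h.occTriples_eq, h.occTriples_eq]
    refine ⟨⟨⟨_, occTriples_p123_minFirstWord hn⟩, _, occTriples_p312_minFirstWord hn⟩,
      0, by omega, ?_⟩
    rw [h _ (by omega) _ (by omega), minFirstWord_lt_iff hn (by omega) (by omega)]
    omega
  · rw [h.occTriples_eq, h.occTriples_eq]
    refine ⟨⟨⟨_, occTriples_p123_maxLastWord hn⟩, _, occTriples_p312_maxLastWord hn⟩,
      0, by omega, ?_⟩
    rw [h _ (by omega) _ (by omega), maxLastWord_lt_iff (by omega) (by omega)]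
    omega
  · rw [h.occTriples_eq, h.occTriples_eq]
    refine ⟨⟨⟨_, occTriples_p123_word24153⟩, _, occTriples_p312_word24153⟩, 0, by omega, ?_⟩
    rw [h _ (by omega) _ (by omega), word24153_lt_iff (by omega) (by omega)]
    omega

theorem sameOrder_of_containsOnce (hf : Set.InjOn f (Set.Iio n))
    (h123 : occTriples p123 n f = {(a, b, c)}) (h312 : occTriples p312 n f = {(x, y, z)})
    (hlast : ∃ i < n - 1, f i < f (n - 1)) :
    SameOrder n f (minFirstWord n) ∨ SameOrder n f (maxLastWord n) ∨
      n = 5 ∧ SameOrder n f word24153 := by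
  obtain ⟨p, hp, hmin⟩ := exists_isMinAt hf hlast
  rcases p.eq_zero_or_pos with rfl | hp0
  · exact Or.inl (sameOrder_minFirstWord hf hmin h123 h312)
  by_cases hacross : ∀ i k, i < p → p < k → k < n → f i < f k
  · exact Or.inr (Or.inl (sameOrder_maxLastWord hf hmin hp0 hp hacross h123 h312))
  push Not at hacross
  obtain ⟨i, k, hi, hpk, hk, hki⟩ := hacross
  obtain rfl : p = y :=
    ((occTriples_p312_eq_singleton_iff.1 h312).2 i p k hi hpk hk (hmin.2 k hk hpk.ne')
      (hki.lt_of_ne fun h ↦ (hi.trans hpk).ne' (hf hk (hi.trans (hpk.trans hk)) h))).2.1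
  by_cases hanti : StrictAntiOn f (Set.Ioo p n)
  · exact Or.inr (Or.inr (sameOrder_word24153 hf hmin hanti h123 h312))
  simp only [StrictAntiOn, Set.mem_Ioo] at hanti
  push Not at hanti
  obtain ⟨i, ⟨hpi, -⟩, j, ⟨-, hj⟩, hij, hfij⟩ := hanti
  have hasc : f i < f j := hfij.lt_of_ne fun h ↦ hij.ne (hf (hij.trans hj) hj h)
  exact Or.inr (Or.inl (sameOrder_maxLastWord_of_ascent hf hmin h123 h312 hpi hij hj hasc))

theorem containsOnce_iff_sameOrder (hn : 4 ≤ n) (hf : Set.InjOn f (Set.Iio n)) :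
    ((∃ t, occTriples p123 n f = {t}) ∧ ∃ t, occTriples p312 n f = {t}) ∧
        (∃ i < n - 1, f i < f (n - 1)) ↔
      SameOrder n f (minFirstWord n) ∨ SameOrder n f (maxLastWord n) ∨
        n = 5 ∧ SameOrder n f word24153 := by
  refine ⟨?_, containsOnce_of_sameOrder hn⟩
  rintro ⟨⟨⟨⟨a, b, c⟩, h123⟩, ⟨x, y, z⟩, h312⟩, hlast⟩
  exact sameOrder_of_containsOnce hf h123 h312 hlast

end Classification

/-! ### Counting -/

theorem last_ne_zero_iff {n : ℕ} {σ : Perm (Fin (n + 1))} :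
    σ (Fin.last n) ≠ 0 ↔ ∃ i < n, permWord σ i < permWord σ n := by
  have hlast : permWord σ n = σ (Fin.last n) := permWord_val σ (Fin.last n)
  rw [hlast]
  constructor
  · intro h
    have hne : σ.symm 0 ≠ Fin.last n := fun h0 ↦ h (by rw [← h0, Equiv.apply_symm_apply])
    refine ⟨σ.symm 0, Fin.val_lt_last hne, ?_⟩
    rw [permWord_val, Equiv.apply_symm_apply]
    exact Fin.pos_of_ne_zero h
  · rintro ⟨i, -, hi⟩ h
    simp [h] at hi

theorem setOf_avoids_containsOnce_last_ne_zero {n : ℕ} (hn : 3 ≤ n) :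
    {σ : Perm (Fin (n + 1)) | (avoids p123 σ ∧ containsOnce p312 σ) ∧ σ (Fin.last n) ≠ 0} =
      {standardization (n + 1) (minSecondWord (n + 1)),
        standardization (n + 1) (minPenultWord (n + 1))} := by
  ext σ
  rw [Set.mem_ofPred_eq, avoids_iff, containsOnce_iff, last_ne_zero_iff, Set.mem_insert_iff,
    Set.mem_singleton_iff, eq_standardization_iff (injOn_minSecondWord _),
    eq_standardization_iff (injOn_minPenultWord (by omega))]
  exact avoids_containsOnce_iff_sameOrder (by omega) (injOn_permWord σ)

theorem ncard_avoids_containsOnce_last_ne_zero {n : ℕ} (hn : 3 ≤ n) :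
    {σ : Perm (Fin (n + 1)) |
      (avoids p123 σ ∧ containsOnce p312 σ) ∧ σ (Fin.last n) ≠ 0}.ncard = 2 := by
  rw [setOf_avoids_containsOnce_last_ne_zero hn]
  refine Set.ncard_pair (Ne.symm (standardization_ne (i := 0) (j := n)
    (injOn_minPenultWord (by omega)) (injOn_minSecondWord _) (by omega) (by omega) ?_ ?_))
  · rw [minPenultWord_lt_iff] <;> omega
  · rw [minSecondWord_lt_iff] <;> omega

theorem setOf_containsOnce_last_ne_zero {n : ℕ} (hn : 3 ≤ n) (hn4 : n ≠ 4) :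
    {σ : Perm (Fin (n + 1)) |
      (containsOnce p123 σ ∧ containsOnce p312 σ) ∧ σ (Fin.last n) ≠ 0} =
      {standardization (n + 1) (minFirstWord (n + 1)),
        standardization (n + 1) (maxLastWord (n + 1))} := by
  ext σ
  rw [Set.mem_ofPred_eq, containsOnce_iff, containsOnce_iff, last_ne_zero_iff, Set.mem_insert_iff,
    Set.mem_singleton_iff, eq_standardization_iff (injOn_minFirstWord (by omega)),
    eq_standardization_iff (injOn_maxLastWord _)]
  refine (containsOnce_iff_sameOrder (by omega) (injOn_permWord σ)).trans ?_
  simp [hn4]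

theorem setOf_containsOnce_last_ne_zero_five :
    {σ : Perm (Fin 5) | (containsOnce p123 σ ∧ containsOnce p312 σ) ∧ σ (Fin.last 4) ≠ 0} =
      {standardization 5 (minFirstWord 5), standardization 5 (maxLastWord 5),
        standardization 5 word24153} := by
  ext σ
  rw [Set.mem_ofPred_eq, containsOnce_iff, containsOnce_iff, last_ne_zero_iff, Set.mem_insert_iff,
    Set.mem_insert_iff, Set.mem_singleton_iff,
    eq_standardization_iff (injOn_minFirstWord (by omega)),
    eq_standardization_iff (injOn_maxLastWord _), eq_standardization_iff injOn_word24153]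
  refine (containsOnce_iff_sameOrder (by omega) (injOn_permWord σ)).trans ?_
  simp

theorem standardization_minFirstWord_ne_maxLastWord {n : ℕ} (hn : 4 ≤ n) :
    standardization n (minFirstWord n) ≠ standardization n (maxLastWord n) := by
  refine standardization_ne (i := 0) (j := 1) (injOn_minFirstWord hn) (injOn_maxLastWord n)
    (by omega) (by omega) ?_ ?_
  · rw [minFirstWord_lt_iff] <;> omega
  · rw [maxLastWord_lt_iff] <;> omega

theorem ncard_containsOnce_last_ne_zero {n : ℕ} (hn : 3 ≤ n) (hn4 : n ≠ 4) :
    {σ : Perm (Fin (n + 1)) |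
      (containsOnce p123 σ ∧ containsOnce p312 σ) ∧ σ (Fin.last n) ≠ 0}.ncard = 2 := by
  rw [setOf_containsOnce_last_ne_zero hn hn4]
  exact Set.ncard_pair (standardization_minFirstWord_ne_maxLastWord (by omega))

theorem ncard_containsOnce_last_ne_zero_five :
    {σ : Perm (Fin 5) |
      (containsOnce p123 σ ∧ containsOnce p312 σ) ∧ σ (Fin.last 4) ≠ 0}.ncard = 3 := by
  have hmaxLast : standardization 5 (maxLastWord 5) ≠ standardization 5 word24153 :=
    Ne.symm (standardization_ne (i := 0) (j := 1) injOn_word24153 (injOn_maxLastWord _)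
      (by omega) (by omega) (by decide) (by decide))
  have hminFirst : standardization 5 (minFirstWord 5) ≠ standardization 5 word24153 :=
    standardization_ne (i := 0) (j := 2) (injOn_minFirstWord (by omega)) injOn_word24153
      (by omega) (by omega) (by decide) (by decide)
  rw [setOf_containsOnce_last_ne_zero_five, Set.ncard_eq_three]
  exact ⟨_, _, _, standardization_minFirstWord_ne_maxLastWord (by omega), hminFirst, hmaxLast, rfl⟩

theorem sAvoidContain_p123_p312 {n : ℕ} (hn : 3 ≤ n) : sAvoidContain p123 p312 n = 2 * n - 5 := by
  induction n, hn using Nat.le_induction with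
  | base => exact sAvoidContain_three (by decide)
  | succ n hn ih =>
    rw [sAvoidContain_succ (by decide) (by decide), ih, ncard_avoids_containsOnce_last_ne_zero hn]
    omega

theorem sContainBoth_p123_p312 {n : ℕ} (hn : 5 ≤ n) : sContainBoth p123 p312 n = 2 * n - 5 := by
  induction n, hn using Nat.le_induction with
  | base =>
    rw [sContainBoth_succ (by decide) (by decide), sContainBoth_succ (by decide) (by decide),
      sContainBoth_three (by decide), ncard_containsOnce_last_ne_zero le_rfl (by omega),
      ncard_containsOnce_last_ne_zero_five]
  | succ n hn ih =>
    rw [sContainBoth_succ (by decide) (by decide), ih,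
      ncard_containsOnce_last_ne_zero (by omega) (by omega)]
    omega

/-- For `n ≥ 5`, `s_n(123;312) = s_n(∅;{123,312})`, both being equal to `2n−5`. -/
theorem sAvoidContain_123_312_eq_sContainBoth :
    ∀ n : ℕ, 5 ≤ n →
      sAvoidContain p123 p312 n = sContainBoth p123 p312 n ∧
        sAvoidContain p123 p312 n = 2 * n - 5 := by
  intro n hn
  have havoid := sAvoidContain_p123_p312 (n := n) (by omega)
  exact ⟨havoid.trans (sContainBoth_p123_p312 hn).symm, havoid⟩
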